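/- Suppose Z ≤ 1/e and n ≥ max{8e, 16·log(1/Z)}. Let b_1, …, b_T be any real sequence with |b_t| ≤ μ for some 0 < μ ≤ 1, and let x_1, …, x_{T+1} be the deviations produced by Discounted-Normal-Predictor. Then for every interval [r, s] ⊆ [1, T] with length τ = s − r + 1, the cumulative reward satisfies Σ_{t=r}^{s} ( g(x_t)·b_t − (1/μ)·|g(x_t) − g(x_{t+1})| ) ≥ max( 0, Σ_{t=r}^{s} b_t + x_r − (τ/n)·(U(n) + 2μ) − U(n) ) − max(x_r, 0) − Z·τ. -/

import Mathlib

/-- The Gauss error function `erf(x) = (2/√π) ∫₀ˣ e^{−s²} ds`. -/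
noncomputable def erf (x : ℝ) : ℝ :=
  (2 / Real.sqrt Real.pi) * ∫ s in (0:ℝ)..x, Real.exp (-s ^ 2)

/-- The unclipped confidence function `g̃(x) = √(n/8) · Z · erf(x/√(8n)) · e^{x²/(16n)}`. -/
noncomputable def gtilde (n Z x : ℝ) : ℝ :=
  Real.sqrt (n / 8) * Z * erf (x / Real.sqrt (8 * n)) * Real.exp (x ^ 2 / (16 * n))

/-- The confidence function `g(x)`, the projection of `g̃(x)` onto `[0,1]`. -/
noncomputable def gconf (n Z x : ℝ) : ℝ := min (max (gtilde n Z x) 0) 1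

/-!
The primitive `Φ` of `g` is convex and serves as a potential. If a round moves the deviation from
`x` to `y = x - x / n + b`, its gain `g x * b` is the linearization `g x * (y - x)` of `Φ y - Φ x`
plus the gain `g x * (x / n)` due to the discount. The linearization error and the switching cost
are both controlled by the slope of `g`, and by the differential equation
`g̃' = x g̃ / (8n) + (Z / (4√π)) e^{-x²/(16n)}` the discount gain pays for them up to `Z`.

Telescoping `Φ` over the interval gives the bound with `0` in the maximum. Telescoping `Φ - id`
gives the other one: the discount costs at most `(U + 2μ) / n` per round as long as
`x ≤ U + 2μ`, and beyond that level `g` is saturated at both ends of the step, so that the reward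
is `b` itself.
-/

theorem hasDerivAt_erf (x : ℝ) :
    HasDerivAt erf ((2 / Real.sqrt Real.pi) * Real.exp (-x ^ 2)) x := by
  have hcont : Continuous fun s : ℝ => Real.exp (-s ^ 2) := by fun_prop
  exact (intervalIntegral.integral_hasDerivAt_right (hcont.intervalIntegrable 0 x)
    (hcont.stronglyMeasurableAtFilter _ _) hcont.continuousAt).const_mul _

theorem monotone_erf : Monotone erf :=
  monotone_of_deriv_nonneg (fun x => (hasDerivAt_erf x).differentiableAt) fun x => by
    rw [(hasDerivAt_erf x).deriv]; positivity

theorem erf_zero : erf 0 = 0 := by simp [erf]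

theorem erf_nonneg {x : ℝ} (hx : 0 ≤ x) : 0 ≤ erf x :=
  erf_zero ▸ monotone_erf hx

theorem erf_nonpos {x : ℝ} (hx : x ≤ 0) : erf x ≤ 0 :=
  erf_zero ▸ monotone_erf hx

theorem integral_le_mul_sub_of_monotone {f : ℝ → ℝ} (hf : Monotone f) (x y : ℝ) :
    ∫ u in x..y, f u ≤ f y * (y - x) := by
  have hint : ∀ a c, IntervalIntegrable f MeasureTheory.volume a c := fun a c =>
    hf.intervalIntegrable
  rcases le_total x y with hxy | hyx
  · calc ∫ u in x..y, f u ≤ ∫ _ in x..y, f y :=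
          intervalIntegral.integral_mono_on hxy (hint x y) intervalIntegrable_const
            fun u hu => hf hu.2
      _ = f y * (y - x) := by rw [intervalIntegral.integral_const, smul_eq_mul, mul_comm]
  · have hle : ∫ _ in y..x, f y ≤ ∫ u in y..x, f u :=
      intervalIntegral.integral_mono_on hyx intervalIntegrable_const (hint y x)
        fun u hu => hf hu.1
    rw [intervalIntegral.integral_const, smul_eq_mul] at hle
    rw [intervalIntegral.integral_symm]
    linarith

theorem sub_add_mul_le_sum_Icc {f a : ℕ → ℝ} {c : ℝ} {r s : ℕ} (hrs : r ≤ s)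
    (h : ∀ t ∈ Finset.Icc r s, f (t + 1) - f t + c ≤ a t) :
    f (s + 1) - f r + c * ((s : ℝ) - r + 1) ≤ ∑ t ∈ Finset.Icc r s, a t := by
  have hcard : ((Finset.Icc r s).card : ℝ) = (s : ℝ) - r + 1 := by
    rw [Nat.card_Icc, Nat.cast_sub (by omega)]
    push_cast
    ring
  calc f (s + 1) - f r + c * ((s : ℝ) - r + 1)
      = ∑ t ∈ Finset.Icc r s, (f (t + 1) - f t + c) := by
        rw [Finset.sum_add_distrib, Finset.sum_Icc_sub hrs, Finset.sum_const, nsmul_eq_mul, hcard,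
          mul_comm c]
    _ ≤ ∑ t ∈ Finset.Icc r s, a t := Finset.sum_le_sum h

section Gtilde

variable {n Z x : ℝ}

theorem gtilde_nonneg (hZ : 0 ≤ Z) (hx : 0 ≤ x) : 0 ≤ gtilde n Z x := by
  have := erf_nonneg (x := x / Real.sqrt (8 * n)) (by positivity)
  unfold gtilde
  positivity

theorem gtilde_nonpos (hZ : 0 ≤ Z) (hx : x ≤ 0) : gtilde n Z x ≤ 0 := by
  have := erf_nonpos (x := x / Real.sqrt (8 * n))
    (div_nonpos_of_nonpos_of_nonneg hx (Real.sqrt_nonneg _))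
  unfold gtilde
  exact mul_nonpos_of_nonpos_of_nonneg
    (mul_nonpos_of_nonneg_of_nonpos (by positivity) this) (Real.exp_nonneg _)

theorem mul_gtilde_nonneg (hZ : 0 ≤ Z) : 0 ≤ x * gtilde n Z x := by
  rcases le_total 0 x with hx | hx
  · exact mul_nonneg hx (gtilde_nonneg hZ hx)
  · exact mul_nonneg_of_nonpos_of_nonpos hx (gtilde_nonpos hZ hx)

theorem sqrt_div_eight_mul_one_div_sqrt (hn : 0 < n) :
    Real.sqrt (n / 8) * (1 / Real.sqrt (8 * n)) = 1 / 8 := by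
  have hsqrt : Real.sqrt (8 * n) = Real.sqrt (n / 8) * 8 := by
    rw [show 8 * n = n / 8 * 8 ^ 2 by ring, Real.sqrt_mul (by positivity),
      Real.sqrt_sq (by norm_num)]
  have : 0 < Real.sqrt (n / 8) := Real.sqrt_pos.2 (by positivity)
  rw [hsqrt]
  field_simp

theorem hasDerivAt_gtilde (hn : 0 < n) (Z x : ℝ) :
    HasDerivAt (gtilde n Z)
      (x * gtilde n Z x / (8 * n)
        + Z / (4 * Real.sqrt Real.pi) * Real.exp (-(x ^ 2 / (16 * n)))) x := by
  have herf : HasDerivAt (fun y : ℝ => erf (y / Real.sqrt (8 * n)))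
      ((2 / Real.sqrt Real.pi) * Real.exp (-(x / Real.sqrt (8 * n)) ^ 2)
        * (1 / Real.sqrt (8 * n))) x :=
    (hasDerivAt_erf _).comp x ((hasDerivAt_id x).div_const _)
  have hexp : HasDerivAt (fun y : ℝ => Real.exp (y ^ 2 / (16 * n)))
      (Real.exp (x ^ 2 / (16 * n)) * (2 * x / (16 * n))) x := by
    simpa using ((hasDerivAt_pow 2 x).div_const (16 * n)).exp
  have hcollapse : Real.exp (-(x / Real.sqrt (8 * n)) ^ 2) * Real.exp (x ^ 2 / (16 * n))
      = Real.exp (-(x ^ 2 / (16 * n))) := by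
    rw [← Real.exp_add, div_pow, Real.sq_sqrt (by positivity)]
    congr 1
    field_simp
    ring
  have hconst : Z / (4 * Real.sqrt Real.pi)
      = Real.sqrt (n / 8) * (1 / Real.sqrt (8 * n)) * Z * (2 / Real.sqrt Real.pi) := by
    rw [sqrt_div_eight_mul_one_div_sqrt hn]
    field_simp
    ring
  refine ((herf.const_mul (Real.sqrt (n / 8) * Z)).mul hexp).congr_deriv ?_
  rw [← hcollapse, hconst]
  unfold gtilde
  ring

theorem continuous_gtilde (hn : 0 < n) (Z : ℝ) : Continuous (gtilde n Z) :=
  continuous_iff_continuousAt.2 fun x => (hasDerivAt_gtilde hn Z x).continuousAt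

theorem monotone_gtilde (hn : 0 < n) (hZ : 0 ≤ Z) : Monotone (gtilde n Z) :=
  monotone_of_deriv_nonneg (fun x => (hasDerivAt_gtilde hn Z x).differentiableAt) fun x => by
    rw [(hasDerivAt_gtilde hn Z x).deriv]
    have := mul_gtilde_nonneg (n := n) (x := x) hZ
    positivity

theorem deriv_gtilde_le (hn : 0 < n) (hZ : 0 ≤ Z) (x : ℝ) :
    deriv (gtilde n Z) x ≤ x * gtilde n Z x / (8 * n) + Z / 7 := by
  rw [(hasDerivAt_gtilde hn Z x).deriv]
  have hpi : (7 : ℝ) ≤ 4 * Real.sqrt Real.pi := by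
    have : (7 / 4 : ℝ) ≤ Real.sqrt Real.pi :=
      Real.le_sqrt_of_sq_le (by linarith [Real.pi_gt_d2])
    linarith
  have hexp : Real.exp (-(x ^ 2 / (16 * n))) ≤ 1 :=
    Real.exp_le_one_iff.2 (neg_nonpos.2 (by positivity))
  gcongr
  calc Z / (4 * Real.sqrt Real.pi) * Real.exp (-(x ^ 2 / (16 * n)))
      ≤ Z / (4 * Real.sqrt Real.pi) := mul_le_of_le_one_right (by positivity) hexp
    _ ≤ Z / 7 := div_le_div_of_nonneg_left hZ (by norm_num) hpi

theorem gtilde_sub_le (hn : 0 < n) (hZ : 0 ≤ Z) {u v : ℝ} (hu : 0 ≤ u) (huv : u ≤ v) :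
    gtilde n Z v - gtilde n Z u ≤ (v * gtilde n Z v / (8 * n) + Z / 7) * (v - u) := by
  refine Convex.image_sub_le_mul_sub_of_deriv_le (convex_Icc u v)
    (continuous_gtilde hn Z).continuousOn
    (fun w _ => (hasDerivAt_gtilde hn Z w).differentiableAt.differentiableWithinAt)
    (fun w hw => ?_) u ⟨le_rfl, huv⟩ v ⟨huv, le_rfl⟩ huv
  rw [interior_Icc] at hw
  have hw0 : 0 ≤ w := hu.trans hw.1.le
  have hprod : w * gtilde n Z w ≤ v * gtilde n Z v :=
    mul_le_mul hw.2.le (monotone_gtilde hn hZ hw.2.le) (gtilde_nonneg hZ hw0) (hu.trans huv)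
  exact (deriv_gtilde_le hn hZ w).trans (by gcongr)

end Gtilde

section Gconf

variable {n Z x : ℝ}

theorem gconf_nonneg (n Z x : ℝ) : 0 ≤ gconf n Z x :=
  le_min (le_max_right _ _) zero_le_one

theorem gconf_le_one (n Z x : ℝ) : gconf n Z x ≤ 1 :=
  min_le_right _ _

theorem gconf_of_nonpos (hZ : 0 ≤ Z) (hx : x ≤ 0) : gconf n Z x = 0 := by
  rw [gconf, max_eq_right (gtilde_nonpos hZ hx), min_eq_left zero_le_one]

theorem gconf_eq_gtilde (hZ : 0 ≤ Z) (hx : 0 ≤ x) (h : gtilde n Z x ≤ 1) :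
    gconf n Z x = gtilde n Z x := by
  rw [gconf, max_eq_left (gtilde_nonneg hZ hx), min_eq_left h]

theorem gconf_eq_one (h : 1 ≤ gtilde n Z x) : gconf n Z x = 1 :=
  min_eq_right (h.trans (le_max_left _ _))

theorem monotone_gconf (hn : 0 < n) (hZ : 0 ≤ Z) : Monotone (gconf n Z) := fun _ _ h =>
  min_le_min_right _ (max_le_max_right _ (monotone_gtilde hn hZ h))

theorem gconf_eq_one_of_le (hn : 0 < n) (hZ : 0 ≤ Z) {U : ℝ} (hU : gconf n Z U = 1)
    (hx : U ≤ x) : gconf n Z x = 1 :=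
  (gconf_le_one n Z x).antisymm (hU ▸ monotone_gconf hn hZ hx)

theorem pos_of_gconf_eq_one (hZ : 0 ≤ Z) {U : ℝ} (hU : gconf n Z U = 1) : 0 < U := by
  by_contra! h
  exact zero_ne_one ((gconf_of_nonpos hZ h).symm.trans hU)

theorem mul_gconf_nonneg (hZ : 0 ≤ Z) (x : ℝ) : 0 ≤ x * gconf n Z x := by
  rcases le_total 0 x with hx | hx
  · exact mul_nonneg hx (gconf_nonneg n Z x)
  · rw [gconf_of_nonpos hZ hx, mul_zero]

end Gconf

section Slope

variable {n Z : ℝ}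

/-- A bound for the slope of `gconf n Z` on `(-∞, v]`. It is the bound of `deriv_gtilde_le` with
`gconf` in place of `gtilde`, which makes it valid beyond the saturation point of `gconf` and on
the negative half-line. -/
noncomputable def slopeBound (n Z v : ℝ) : ℝ :=
  v * gconf n Z v / (8 * n) + Z / 7

theorem slopeBound_nonneg (hn : 0 < n) (hZ : 0 ≤ Z) (v : ℝ) : 0 ≤ slopeBound n Z v := by
  have := mul_gconf_nonneg (n := n) hZ v
  unfold slopeBound
  positivity

theorem slopeBound_le (hn : 0 < n) {v : ℝ} (hv : v ≤ n) :
    slopeBound n Z v ≤ gconf n Z v / 8 + Z / 7 := by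
  have hle : v * gconf n Z v / (8 * n) ≤ n * gconf n Z v / (8 * n) := by
    have := gconf_nonneg n Z v
    gcongr
  have hcancel : n * gconf n Z v / (8 * n) = gconf n Z v / 8 := by field_simp
  unfold slopeBound
  linarith

theorem gconf_sub_le_of_nonneg (hn : 0 < n) (hZ : 0 ≤ Z) {u v : ℝ} (hu : 0 ≤ u) (huv : u ≤ v) :
    gconf n Z v - gconf n Z u ≤ slopeBound n Z v * (v - u) := by
  have hv : 0 ≤ v := hu.trans huv
  rcases le_total (gtilde n Z v) 1 with hgv | hgv
  · rw [slopeBound, gconf_eq_gtilde hZ hv hgv,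
      gconf_eq_gtilde hZ hu ((monotone_gtilde hn hZ huv).trans hgv)]
    exact gtilde_sub_le hn hZ hu huv
  rcases le_total 1 (gtilde n Z u) with hgu | hgu
  · rw [gconf_eq_one hgv, gconf_eq_one hgu, sub_self]
    exact mul_nonneg (slopeBound_nonneg hn hZ v) (sub_nonneg.2 huv)
  obtain ⟨w, ⟨huw, hwv⟩, hw⟩ : ∃ w ∈ Set.Icc u v, gtilde n Z w = 1 :=
    intermediate_value_Icc huv (continuous_gtilde hn Z).continuousOn ⟨hgu, hgv⟩
  have : 0 ≤ w := hu.trans huw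
  rw [slopeBound, gconf_eq_one hgv, gconf_eq_gtilde hZ hu hgu]
  calc 1 - gtilde n Z u = gtilde n Z w - gtilde n Z u := by rw [hw]
    _ ≤ (w * gtilde n Z w / (8 * n) + Z / 7) * (w - u) := gtilde_sub_le hn hZ hu huw
    _ = (w * 1 / (8 * n) + Z / 7) * (w - u) := by rw [hw]
    _ ≤ (v * 1 / (8 * n) + Z / 7) * (v - u) := by gcongr

theorem gconf_sub_le (hn : 0 < n) (hZ : 0 ≤ Z) {u v : ℝ} (huv : u ≤ v) :
    gconf n Z v - gconf n Z u ≤ slopeBound n Z v * (v - u) := by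
  have hS := slopeBound_nonneg hn hZ v
  rcases le_total 0 u with hu | hu
  · exact gconf_sub_le_of_nonneg hn hZ hu huv
  rcases le_total 0 v with hv | hv
  · calc gconf n Z v - gconf n Z u = gconf n Z v - gconf n Z 0 := by
          rw [gconf_of_nonpos hZ hu, gconf_of_nonpos hZ le_rfl]
      _ ≤ slopeBound n Z v * (v - 0) := gconf_sub_le_of_nonneg hn hZ le_rfl hv
      _ ≤ slopeBound n Z v * (v - u) := by gcongr
  · rw [gconf_of_nonpos hZ hu, gconf_of_nonpos hZ hv, sub_self]
    exact mul_nonneg hS (sub_nonneg.2 huv)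

theorem abs_gconf_sub_le (hn : 0 < n) (hZ : 0 ≤ Z) (x y : ℝ) :
    |gconf n Z x - gconf n Z y| ≤ slopeBound n Z (max x y) * |y - x| := by
  rcases le_total x y with hxy | hyx
  · rw [abs_sub_comm, abs_of_nonneg (sub_nonneg.2 (monotone_gconf hn hZ hxy)), max_eq_right hxy,
      abs_of_nonneg (sub_nonneg.2 hxy)]
    exact gconf_sub_le hn hZ hxy
  · rw [abs_of_nonneg (sub_nonneg.2 (monotone_gconf hn hZ hyx)), max_eq_left hyx, abs_sub_comm,
      abs_of_nonneg (sub_nonneg.2 hyx)]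
    exact gconf_sub_le hn hZ hyx

theorem gconf_le_of_le_add_one (hn : 0 < n) (hZ : 0 ≤ Z) {x y : ℝ} (hyn : y ≤ n)
    (hyx : y ≤ x + 1) : gconf n Z y ≤ 8 / 7 * (gconf n Z x + Z / 7) := by
  rcases le_total y x with hle | hle
  · have := monotone_gconf hn hZ hle
    have := gconf_nonneg n Z x
    linarith
  · have hsub : gconf n Z y - gconf n Z x ≤ slopeBound n Z y :=
      (gconf_sub_le hn hZ hle).trans
        (mul_le_of_le_one_right (slopeBound_nonneg hn hZ y) (by linarith))
    have := slopeBound_le (Z := Z) hn hyn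
    linarith

theorem gconf_le_mul_self (hn : 0 < n) (hZ : 0 ≤ Z) {x : ℝ} (hx0 : 0 ≤ x) (hxn : x ≤ n) :
    gconf n Z x ≤ (gconf n Z x / 8 + Z / 7) * x := by
  calc gconf n Z x = gconf n Z x - gconf n Z 0 := by rw [gconf_of_nonpos hZ le_rfl, sub_zero]
    _ ≤ slopeBound n Z x * (x - 0) := gconf_sub_le hn hZ hx0
    _ ≤ (gconf n Z x / 8 + Z / 7) * x := by
      rw [sub_zero]
      gcongr
      exact slopeBound_le hn hxn

theorem six_mul_slopeBound_self_le (hn : 0 < n) (hZ : 0 ≤ Z) (x : ℝ) :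
    6 * slopeBound n Z x ≤ gconf n Z x * (x / n) + Z := by
  have hgain : 0 ≤ x * gconf n Z x / n := div_nonneg (mul_gconf_nonneg hZ x) hn.le
  calc 6 * slopeBound n Z x = 3 / 4 * (x * gconf n Z x / n) + 6 / 7 * Z := by
        unfold slopeBound
        field_simp
        ring
    _ ≤ x * gconf n Z x / n + Z := by linarith
    _ = gconf n Z x * (x / n) + Z := by ring

theorem six_mul_slopeBound_le_of_le_one (hn : 1 ≤ n) (hZ : 0 ≤ Z) {y : ℝ} (hy : y ≤ 1) :
    6 * slopeBound n Z y ≤ Z := by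
  have hn0 : 0 < n := by linarith
  have hg : gconf n Z y ≤ 8 / 7 * (gconf n Z 0 + Z / 7) :=
    gconf_le_of_le_add_one hn0 hZ (hy.trans hn) (by linarith)
  rw [gconf_of_nonpos hZ le_rfl] at hg
  have := slopeBound_le (Z := Z) hn0 (hy.trans hn)
  linarith

theorem two_mul_slopeBound_le (hn : 0 < n) (hZ : 0 ≤ Z) {x y : ℝ} (hx : 0 ≤ x) (hxy : x ≤ y)
    (hyx : y ≤ x + 1) (hyn : y ≤ n) : 2 * slopeBound n Z y ≤ gconf n Z x * (x / n) + Z := by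
  have hgx := gconf_nonneg n Z x
  have hgain : 0 ≤ x * gconf n Z x := mul_gconf_nonneg hZ x
  have hself := gconf_le_mul_self hn hZ hx (hxy.trans hyn)
  have hyg : y * gconf n Z x ≤ (x + 1) * gconf n Z x := by gcongr
  have hyZ : y * Z ≤ n * Z := by gcongr
  have hxZ : x * Z ≤ n * Z := by have := hxy.trans hyn; gcongr
  have hprod : y * gconf n Z y ≤ 9 / 7 * (x * gconf n Z x) + 16 / 49 * (n * Z) := by
    calc y * gconf n Z y ≤ y * (8 / 7 * (gconf n Z x + Z / 7)) :=
          mul_le_mul_of_nonneg_left (gconf_le_of_le_add_one hn hZ hyn hyx) (hx.trans hxy)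
      _ = 8 / 7 * (y * gconf n Z x) + 8 / 49 * (y * Z) := by ring
      _ ≤ 9 / 7 * (x * gconf n Z x) + 16 / 49 * (n * Z) := by linarith
  calc 2 * slopeBound n Z y = (y * gconf n Z y) / (4 * n) + 2 / 7 * Z := by
        unfold slopeBound
        field_simp
        ring
    _ ≤ (4 * (x * gconf n Z x) + 20 / 7 * (n * Z)) / (4 * n) + 2 / 7 * Z := by
        have : 0 ≤ n * Z := by positivity
        gcongr
        linarith
    _ = gconf n Z x * (x / n) + Z := by
        field_simp
        ring

end Slope

section Potential

variable {n Z : ℝ}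

/-- The potential `Φ(x) = ∫₀ˣ g(u) du` of the predictor; its increments bound the rewards of the
rounds from below. -/
noncomputable def potential (n Z x : ℝ) : ℝ :=
  ∫ u in (0:ℝ)..x, gconf n Z u

theorem potential_zero (n Z : ℝ) : potential n Z 0 = 0 :=
  intervalIntegral.integral_same

theorem potential_sub_le (hn : 0 < n) (hZ : 0 ≤ Z) (x y : ℝ) :
    potential n Z y - potential n Z x ≤ gconf n Z y * (y - x) := by
  have hmono := monotone_gconf hn hZ
  rw [potential, potential, intervalIntegral.integral_interval_sub_left hmono.intervalIntegrable
    hmono.intervalIntegrable]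
  exact integral_le_mul_sub_of_monotone hmono x y

theorem potential_nonneg (hn : 0 < n) (hZ : 0 ≤ Z) (x : ℝ) : 0 ≤ potential n Z x := by
  have := potential_sub_le hn hZ x 0
  rw [potential_zero, gconf_of_nonpos hZ le_rfl] at this
  linarith

theorem potential_le_max (hn : 0 < n) (hZ : 0 ≤ Z) (x : ℝ) : potential n Z x ≤ max x 0 := by
  calc potential n Z x = potential n Z x - potential n Z 0 := by rw [potential_zero, sub_zero]
    _ ≤ gconf n Z x * (x - 0) := potential_sub_le hn hZ 0 x
    _ ≤ gconf n Z x * max x 0 := by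
      rw [sub_zero]
      exact mul_le_mul_of_nonneg_left (le_max_left x 0) (gconf_nonneg n Z x)
    _ ≤ max x 0 := mul_le_of_le_one_left (le_max_right x 0) (gconf_le_one n Z x)

theorem sub_le_potential (hn : 0 < n) (hZ : 0 ≤ Z) {U : ℝ} (hU : gconf n Z U = 1) (x : ℝ) :
    x - U ≤ potential n Z x := by
  have hsub := potential_sub_le hn hZ x U
  rw [hU] at hsub
  have := potential_nonneg hn hZ U
  linarith

end Potential

section Round

variable {n Z μ x y b : ℝ}

theorem abs_discounted_add_le (hn : 1 ≤ n) (hx : |x| ≤ n * μ) (hb : |b| ≤ μ) :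
    |(1 - 1 / n) * x + b| ≤ n * μ := by
  have hn0 : 0 < n := by linarith
  have hρ : 0 ≤ 1 - 1 / n := sub_nonneg.2 ((div_le_one hn0).2 hn)
  calc |(1 - 1 / n) * x + b| ≤ |(1 - 1 / n) * x| + |b| := abs_add_le _ _
    _ = (1 - 1 / n) * |x| + |b| := by rw [abs_mul, abs_of_nonneg hρ]
    _ ≤ (1 - 1 / n) * (n * μ) + μ := by gcongr
    _ = n * μ := by field_simp; ring

theorem potential_error_add_switching_le (hn : 0 < n) (hZ : 0 ≤ Z) (hμ0 : 0 < μ) (hμ1 : μ ≤ 1)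
    {k : ℝ} (hk : |y - x| ≤ k * μ) :
    potential n Z y - potential n Z x - gconf n Z x * (y - x)
        + (1 / μ) * |gconf n Z x - gconf n Z y|
      ≤ (k ^ 2 + k) * slopeBound n Z (max x y) := by
  have hsub := potential_sub_le hn hZ x y
  have hS := slopeBound_nonneg hn hZ (max x y)
  have herr : (gconf n Z y - gconf n Z x) * (y - x)
      ≤ |gconf n Z x - gconf n Z y| * |y - x| := by
    rw [abs_sub_comm (gconf n Z x), ← abs_mul]
    exact le_abs_self _
  have hk0 : 0 ≤ k := nonneg_of_mul_nonneg_left ((abs_nonneg _).trans hk) hμ0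
  have hfactor : (|y - x| + 1 / μ) * |y - x| ≤ k ^ 2 + k := by
    calc (|y - x| + 1 / μ) * |y - x| ≤ (k * μ + 1 / μ) * (k * μ) := by gcongr
      _ = k ^ 2 * μ ^ 2 + k := by field_simp
      _ ≤ k ^ 2 + k := by
        gcongr
        exact mul_le_of_le_one_right (sq_nonneg k) (pow_le_one₀ hμ0.le hμ1)
  calc potential n Z y - potential n Z x - gconf n Z x * (y - x)
        + (1 / μ) * |gconf n Z x - gconf n Z y|
      ≤ (|y - x| + 1 / μ) * |gconf n Z x - gconf n Z y| := by linarith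
    _ ≤ (|y - x| + 1 / μ) * (slopeBound n Z (max x y) * |y - x|) := by
      gcongr
      exact abs_gconf_sub_le hn hZ x y
    _ = ((|y - x| + 1 / μ) * |y - x|) * slopeBound n Z (max x y) := by ring
    _ ≤ (k ^ 2 + k) * slopeBound n Z (max x y) := by gcongr

theorem potential_error_add_switching_le_discount_gain (hn : 1 ≤ n) (hZ : 0 ≤ Z) (hμ0 : 0 < μ)
    (hμ1 : μ ≤ 1) (hx : |x| ≤ n * μ) (hb : |b| ≤ μ) (hy : y = (1 - 1 / n) * x + b) :
    potential n Z y - potential n Z x - gconf n Z x * (y - x)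
        + (1 / μ) * |gconf n Z x - gconf n Z y|
      ≤ gconf n Z x * (x / n) + Z := by
  have hn0 : 0 < n := by linarith
  obtain ⟨hb_ge, hb_le⟩ := abs_le.1 hb
  obtain ⟨hdisc_ge, hdisc_le⟩ : -μ ≤ x / n ∧ x / n ≤ μ := by
    rw [← abs_le, abs_div, abs_of_pos hn0, div_le_iff₀' hn0]
    exact hx
  have hstep : y - x = b - x / n := by rw [hy]; ring
  have hstep_abs : |y - x| ≤ 2 * μ := abs_le.2 ⟨by linarith, by linarith⟩
  have hbound := potential_error_add_switching_le hn0 hZ hμ0 hμ1 hstep_abs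
  rcases le_total y x with hyx | hxy
  · rw [max_eq_left hyx] at hbound
    linarith [six_mul_slopeBound_self_le hn0 hZ x]
  rw [max_eq_right hxy] at hbound
  rcases le_total x 0 with hx0 | hx0
  · have hρx : (1 - 1 / n) * x ≤ 0 :=
      mul_nonpos_of_nonneg_of_nonpos (sub_nonneg.2 ((div_le_one hn0).2 hn)) hx0
    have := six_mul_slopeBound_le_of_le_one (y := y) hn hZ (by linarith)
    rw [gconf_of_nonpos hZ hx0] at hbound ⊢
    linarith
  · -- Here the slope is taken at `y`, not at `x`; the discount makes up for this by shortening
    -- the step from `2 * μ` to `μ`.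
    have hdisc0 : 0 ≤ x / n := by positivity
    have hyn : y ≤ n := by
      calc y ≤ n * μ := hy ▸ (le_abs_self _).trans (abs_discounted_add_le hn hx hb)
        _ ≤ n := mul_le_of_le_one_right hn0.le hμ1
    have hstep_up : |y - x| ≤ 1 * μ := abs_le.2 ⟨by linarith, by linarith⟩
    have hbound_up := potential_error_add_switching_le hn0 hZ hμ0 hμ1 hstep_up
    rw [max_eq_right hxy] at hbound_up
    linarith [two_mul_slopeBound_le hn0 hZ hx0 hxy (by linarith) hyn]

theorem potential_sub_le_reward (hn : 1 ≤ n) (hZ : 0 ≤ Z) (hμ0 : 0 < μ) (hμ1 : μ ≤ 1)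
    (hx : |x| ≤ n * μ) (hb : |b| ≤ μ) (hy : y = (1 - 1 / n) * x + b) :
    potential n Z y - potential n Z x - Z
      ≤ gconf n Z x * b - (1 / μ) * |gconf n Z x - gconf n Z y| := by
  have herr := potential_error_add_switching_le_discount_gain hn hZ hμ0 hμ1 hx hb hy
  have hgain : gconf n Z x * b = gconf n Z x * (y - x) + gconf n Z x * (x / n) := by
    rw [hy]; ring
  linarith

theorem potential_sub_id_sub_le_reward_sub (hn : 1 ≤ n) (hZ : 0 ≤ Z) (hμ0 : 0 < μ) (hμ1 : μ ≤ 1)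
    {U : ℝ} (hU : gconf n Z U = 1) (hx : |x| ≤ n * μ) (hb : |b| ≤ μ)
    (hy : y = (1 - 1 / n) * x + b) :
    (potential n Z y - y) - (potential n Z x - x) - ((U + 2 * μ) / n + Z)
      ≤ gconf n Z x * b - (1 / μ) * |gconf n Z x - gconf n Z y| - b := by
  have hn0 : 0 < n := by linarith
  have hstep : y = x - x / n + b := by rw [hy]; ring
  rcases le_total x (U + 2 * μ) with hxU | hUx
  · have hdisc : x / n ≤ (U + 2 * μ) / n := by gcongr
    linarith [potential_sub_le_reward hn hZ hμ0 hμ1 hx hb hy]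
  · have hU0 : 0 < U := pos_of_gconf_eq_one hZ hU
    have hdisc : x / n ≤ μ := (div_le_iff₀' hn0).2 ((le_abs_self x).trans hx)
    have hgx : gconf n Z x = 1 := gconf_eq_one_of_le hn0 hZ hU (by linarith)
    have hgy : gconf n Z y = 1 :=
      gconf_eq_one_of_le hn0 hZ hU (by linarith [(abs_le.1 hb).1])
    have hsub := potential_sub_le hn0 hZ x y
    have hcost : 0 ≤ (U + 2 * μ) / n := by positivity
    rw [hgy] at hsub
    rw [hgx, hgy, sub_self, abs_zero]
    linarith

end Round

section Interval

variable {n Z μ U : ℝ} {b x : ℕ → ℝ} {m r s : ℕ}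

theorem abs_deviation_le (hn : 1 ≤ n) (hxm : |x m| ≤ n * μ)
    (hb : ∀ t, m ≤ t → t < s → |b t| ≤ μ)
    (hrec : ∀ t, m ≤ t → t < s → x (t + 1) = (1 - 1 / n) * x t + b t) (hms : m ≤ s) :
    |x s| ≤ n * μ := by
  induction s, hms using Nat.le_induction with
  | base => exact hxm
  | succ t hmt ih =>
    have hxt : |x t| ≤ n * μ :=
      ih (fun i hmi hit => hb i hmi (by omega)) fun i hmi hit => hrec i hmi (by omega)
    rw [hrec t hmt t.lt_succ_self]
    exact abs_discounted_add_le hn hxt (hb t hmt t.lt_succ_self)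

theorem dnp_reward_lower_bound_general (hn : 1 ≤ n) (hZ : 0 ≤ Z) (hU : gconf n Z U = 1)
    (hμ0 : 0 < μ) (hμ1 : μ ≤ 1) (hxm : |x m| ≤ n * μ)
    (hb : ∀ t, m ≤ t → t ≤ s → |b t| ≤ μ)
    (hrec : ∀ t, m ≤ t → t ≤ s → x (t + 1) = (1 - 1 / n) * x t + b t)
    (hmr : m ≤ r) (hrs : r ≤ s) :
    max 0 (∑ t ∈ Finset.Icc r s, b t + x r - ((s : ℝ) - r + 1) / n * (U + 2 * μ) - U)
        - max (x r) 0 - Z * ((s : ℝ) - r + 1)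
      ≤ ∑ t ∈ Finset.Icc r s,
        (gconf n Z (x t) * b t - (1 / μ) * |gconf n Z (x t) - gconf n Z (x (t + 1))|) := by
  have hn0 : 0 < n := by linarith
  have hround : ∀ t ∈ Finset.Icc r s,
      |x t| ≤ n * μ ∧ |b t| ≤ μ ∧ x (t + 1) = (1 - 1 / n) * x t + b t := fun t ht => by
    obtain ⟨hrt, hts⟩ := Finset.mem_Icc.1 ht
    have hmt : m ≤ t := hmr.trans hrt
    exact ⟨abs_deviation_le hn hxm (fun i hmi hit => hb i hmi (by omega))
      (fun i hmi hit => hrec i hmi (by omega)) hmt, hb t hmt hts, hrec t hmt hts⟩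
  have hreward := sub_add_mul_le_sum_Icc (f := fun t => potential n Z (x t)) (c := -Z)
    (a := fun t => gconf n Z (x t) * b t
      - (1 / μ) * |gconf n Z (x t) - gconf n Z (x (t + 1))|) hrs fun t ht => by
    obtain ⟨hxt, hbt, hrect⟩ := hround t ht
    exact potential_sub_le_reward hn hZ hμ0 hμ1 hxt hbt hrect
  have hregret := sub_add_mul_le_sum_Icc (f := fun t => potential n Z (x t) - x t)
    (c := -((U + 2 * μ) / n + Z))
    (a := fun t => gconf n Z (x t) * b t
      - (1 / μ) * |gconf n Z (x t) - gconf n Z (x (t + 1))| - b t) hrs fun t ht => by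
    obtain ⟨hxt, hbt, hrect⟩ := hround t ht
    exact potential_sub_id_sub_le_reward_sub hn hZ hμ0 hμ1 hU hxt hbt hrect
  rw [Finset.sum_sub_distrib] at hregret
  have hstart := potential_le_max hn0 hZ (x r)
  have hend := potential_nonneg hn0 hZ (x (s + 1))
  have hend_sub := sub_le_potential hn0 hZ hU (x (s + 1))
  rw [sub_sub, sub_le_iff_le_add]
  refine max_le (by linarith) ?_
  have hcost : ((s : ℝ) - r + 1) / n * (U + 2 * μ) = (U + 2 * μ) / n * ((s : ℝ) - r + 1) := by
    ring
  linarith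

end Interval

/-- **Theorem 2 (first bound): reward lower bound for Discounted-Normal-Predictor.** -/
theorem dnp_reward_lower_bound
    (n Z : ℝ) (hn0 : 0 < n) (hZ0 : 0 < Z) (hZ : Z ≤ 1 / Real.exp 1)
    (hn : n ≥ max (8 * Real.exp 1) (16 * Real.log (1 / Z)))
    (U : ℝ) (hUpos : 0 < U) (hUdef : gtilde n Z U = 1)
    (hUuniq : ∀ y, 0 < y → gtilde n Z y = 1 → y = U)
    (T : ℕ) (b x : ℕ → ℝ)
    (μ : ℝ) (hμ0 : 0 < μ) (hμ1 : μ ≤ 1)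
    (hb : ∀ t, 1 ≤ t → t ≤ T → |b t| ≤ μ)
    (hx1 : x 1 = 0)
    (hxrec : ∀ t, 1 ≤ t → t ≤ T → x (t + 1) = (1 - 1 / n) * x t + b t)
    (r s : ℕ) (hr : 1 ≤ r) (hrs : r ≤ s) (hsT : s ≤ T) :
    ∑ t ∈ Finset.Icc r s,
        (gconf n Z (x t) * b t - (1 / μ) * |gconf n Z (x t) - gconf n Z (x (t + 1))|)
      ≥ max 0 (∑ t ∈ Finset.Icc r s, b t + x r
            - ((s : ℝ) - r + 1) / n * (U + 2 * μ) - U)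
        - max (x r) 0 - Z * ((s : ℝ) - r + 1) := by
  have hn1 : 1 ≤ n := by
    linarith [Real.add_one_le_exp (1 : ℝ), (le_max_left (8 * Real.exp 1) _).trans hn]
  exact dnp_reward_lower_bound_general hn1 hZ0.le (gconf_eq_one hUdef.ge) hμ0 hμ1
    (by rw [hx1, abs_zero]; positivity) (fun t ht hts => hb t ht (hts.trans hsT))
    (fun t ht hts => hxrec t ht (hts.trans hsT)) hr hrs
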